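/- For every M > 0 there exists a single-buyer pricing instance with signals (whose conditional value distributions are not all regular), together with an ex post individually rational, Bayesian incentive compatible mechanism with no negative payments, whose expected revenue is at least M times the optimal revenue under public signals DRev of that instance. -/

import Mathlib

open MeasureTheory Set

/-- A single-buyer pricing instance with signals: a measurable space `S` of signals with a
σ-finite measure `μ`, and a measurable joint density `f` on values `t ∈ ℝ_{≥0}` and
signals `s ∈ S` with total integral `1`. -/
structure SignalInstance where
  /-- the signal space -/
  (S : Type)
  [mS : MeasurableSpace S]
  /-- a σ-finite measure on the signal space -/
  (μ : MeasureTheory.Measure S)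
  (sigmaFinite : MeasureTheory.SigmaFinite μ)
  /-- the joint density of (value, signal) -/
  (f : ℝ → S → ℝ)
  (f_meas : Measurable fun q : ℝ × S => f q.1 q.2)
  (f_nonneg : ∀ t s, 0 ≤ f t s)
  (f_zero : ∀ t s, t < 0 → f t s = 0)
  (f_prob : ∫ s, (∫ t in Set.Ici (0:ℝ), f t s) ∂μ = 1)

attribute [instance] SignalInstance.mS

/-- The expected revenue of a mechanism with payment rule `p` on instance `I`. -/
noncomputable def SignalInstance.Rev (I : SignalInstance) (p : ℝ → I.S → ℝ) : ℝ :=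
  ∫ s, (∫ t in Set.Ici (0:ℝ), I.f t s * p t s) ∂I.μ

/-- The optimal revenue under public signals (naïve pricing revenue):
`DRev = ∫_S sup_{r≥0} r·(∫_{t≥r} f(t,s) dt) dμ(s)`. -/
noncomputable def SignalInstance.DRev (I : SignalInstance) : ℝ :=
  ∫ s, sSup {y : ℝ | ∃ r : ℝ, 0 ≤ r ∧ y = r * ∫ t in Set.Ici r, I.f t s} ∂I.μ

/-! Split the range of values into finitely many cells and let the signal be a uniformly random set
of cells among those containing the cell of the value. If the buyer reports a value whose cell
is not in the signal, nothing is sold; otherwise the item is sold at a price attached to the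
reported cell. A lie about the cell is exposed by half of the signals, so pricing each cell at
half of its left endpoint is incentive compatible, and this extracts a constant fraction of the
expected value. On the other hand, each of the `2 ^ N` signals, `N` being the number of cells,
has a joint density with the value which is at most `2 / 2 ^ N` times the prior density, so
public signals yield at most twice what a posted price earns from the prior. Under an
equal-revenue prior, with density proportional to `t⁻²` on the first `N` dyadic intervals, every
posted price earns a bounded amount while the expected value grows linearly in `N`.
-/

section RandomCells

variable {ι : Type*} [Fintype ι]

lemma card_filter_superset [DecidableEq ι] (u : Finset ι) :
    (Finset.univ.filter (u ⊆ ·)).card = 2 ^ (Fintype.card ι - u.card) := by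
  rw [← Finset.card_univ, ← Finset.card_Icc_finset u.subset_univ]
  congr 1
  ext s
  simp

variable (ι) in
/-- The probability of each signal `s : Finset ι` that contains the cell of the value, given that
value: the signal is uniform among the `2 ^ (card ι - 1)` sets containing a prescribed cell. -/
noncomputable def signalProb : ℝ := (2 ^ (Fintype.card ι - 1))⁻¹

lemma signalProb_pos : 0 < signalProb ι := by
  unfold signalProb
  positivity

lemma two_pow_card_mul_signalProb [Nonempty ι] : 2 ^ Fintype.card ι * signalProb ι = 2 := by
  rw [signalProb, ← div_eq_mul_inv, div_eq_iff (by positivity), ← pow_succ',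
    Nat.sub_add_cancel Fintype.card_pos]

lemma sum_signalProb_of_mem [DecidableEq ι] (k : ι) :
    ∑ s : Finset ι with k ∈ s, signalProb ι = 1 := by
  have h := card_filter_superset {k}
  simp only [Finset.singleton_subset_iff, Finset.card_singleton] at h
  rw [Finset.sum_const, h, signalProb, nsmul_eq_mul, Nat.cast_pow, Nat.cast_ofNat,
    mul_inv_cancel₀ (by positivity)]

lemma sum_signalProb_of_mem_of_mem [DecidableEq ι] {k l : ι} (hkl : k ≠ l) :
    ∑ s : Finset ι with k ∈ s ∧ l ∈ s, signalProb ι = 1 / 2 := by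
  have h := card_filter_superset {k, l}
  have hcard : Fintype.card ι - 1 = Fintype.card ι - 2 + 1 := by
    have := Finset.card_le_univ {k, l}
    rw [Finset.card_pair hkl] at this
    omega
  simp only [Finset.insert_subset_iff, Finset.singleton_subset_iff, Finset.card_pair hkl] at h
  rw [Finset.sum_const, h, signalProb, hcard, nsmul_eq_mul, Nat.cast_pow, Nat.cast_ofNat, pow_succ]
  field_simp

lemma sum_signalProb_mul_sum_mem (a : ι → ℝ) :
    ∑ s : Finset ι, signalProb ι * ∑ k ∈ s, a k = ∑ k, a k := by
  classical
  calc ∑ s : Finset ι, signalProb ι * ∑ k ∈ s, a k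
      = ∑ s : Finset ι, ∑ k, if k ∈ s then signalProb ι * a k else 0 := by
        simp only [Finset.mul_sum, Finset.sum_ite_mem, Finset.univ_inter]
    _ = ∑ k, (∑ s : Finset ι with k ∈ s, signalProb ι) * a k := by
        rw [Finset.sum_comm]
        simp only [Finset.sum_filter, Finset.sum_mul, ite_mul, zero_mul]
    _ = ∑ k, a k := by simp only [sum_signalProb_of_mem, one_mul]

end RandomCells

/-- A prior distribution of the value, supported on finitely many disjoint cells; `density` need not
vanish outside the cells. -/
structure CellPrior (ι : Type) [Fintype ι] where
  cell : ι → Set ℝ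
  density : ℝ → ℝ
  measurableSet_cell : ∀ k, MeasurableSet (cell k)
  pairwise_disjoint_cell : Pairwise (Function.onFun Disjoint cell)
  nonneg_of_mem_cell : ∀ k, ∀ t ∈ cell k, 0 ≤ t
  measurable_density : Measurable density
  density_pos : ∀ k, ∀ t ∈ cell k, 0 < density t
  integral_density : ∫ t in ⋃ k, cell k, density t = 1

namespace CellPrior

variable {ι : Type} [Fintype ι] (P : CellPrior ι)

/-- The union of the cells listed by the signal `s`. -/
def region (s : Finset ι) : Set ℝ := ⋃ k ∈ s, P.cell k

variable {P} in
lemma cell_index_unique {t : ℝ} {k l : ι} (hk : t ∈ P.cell k) (hl : t ∈ P.cell l) : k = l := by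
  by_contra hkl
  exact disjoint_left.1 (P.pairwise_disjoint_cell hkl) hk hl

variable {P} in
lemma mem_region_iff {t : ℝ} {k : ι} (hk : t ∈ P.cell k) {s : Finset ι} :
    t ∈ P.region s ↔ k ∈ s := by
  simp only [region, mem_iUnion, exists_prop]
  exact ⟨fun ⟨_, hl, htl⟩ => cell_index_unique hk htl ▸ hl, fun h => ⟨k, h, hk⟩⟩

variable {P} in
lemma exists_mem_cell_of_mem_region {t : ℝ} {s : Finset ι} (ht : t ∈ P.region s) :
    ∃ k, t ∈ P.cell k := by
  simp only [region, mem_iUnion, exists_prop] at ht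
  exact ht.imp fun _ h => h.2

lemma region_subset_iUnion_cell (s : Finset ι) : P.region s ⊆ ⋃ k, P.cell k := fun _ ht =>
  mem_iUnion.2 (exists_mem_cell_of_mem_region ht)

lemma region_subset_Ici (s : Finset ι) : P.region s ⊆ Ici 0 := fun _ ht =>
  let ⟨k, hk⟩ := exists_mem_cell_of_mem_region ht
  P.nonneg_of_mem_cell k _ hk

lemma density_pos_of_mem_region {t : ℝ} {s : Finset ι} (ht : t ∈ P.region s) : 0 < P.density t :=
  let ⟨k, hk⟩ := exists_mem_cell_of_mem_region ht
  P.density_pos k t hk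

lemma measurableSet_region (s : Finset ι) : MeasurableSet (P.region s) :=
  s.measurableSet_biUnion fun k _ => P.measurableSet_cell k

lemma measurable_indicator_region {h : ℝ → ℝ} (hh : Measurable h) :
    Measurable fun q : ℝ × Finset ι => (P.region q.2).indicator h q.1 :=
  measurable_from_prod_countable_left fun s => hh.indicator (P.measurableSet_region s)

lemma integrableOn_density : IntegrableOn P.density (⋃ k, P.cell k) :=
  integrable_of_integral_eq_one P.integral_density

lemma setIntegral_iUnion_cell {h : ℝ → ℝ} (hh : ∀ k, IntegrableOn h (P.cell k)) :
    ∫ t in ⋃ k, P.cell k, h t = ∑ k, ∫ t in P.cell k, h t :=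
  integral_iUnion_fintype P.measurableSet_cell P.pairwise_disjoint_cell hh

lemma sum_signalProb_mul_setIntegral_indicator_region {h : ℝ → ℝ}
    (hh : ∀ k, IntegrableOn h (P.cell k)) :
    ∑ s, signalProb ι * ∫ t in Ici 0, (P.region s).indicator h t =
      ∑ k, ∫ t in P.cell k, h t := by
  have hs (s : Finset ι) : ∫ t in Ici 0, (P.region s).indicator h t =
      ∑ k ∈ s, ∫ t in P.cell k, h t := by
    rw [setIntegral_indicator (P.measurableSet_region s),
      inter_eq_right.2 (P.region_subset_Ici s), region]
    exact integral_biUnion_finset s (fun k _ => P.measurableSet_cell k)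
      (P.pairwise_disjoint_cell.set_pairwise _) fun k _ => hh k
  simp only [hs, sum_signalProb_mul_sum_mem]

/-- The instance in which the value has prior `P` and the signal is a uniformly random set of cells
among those containing the cell of the value. -/
noncomputable def toSignalInstance : SignalInstance where
  S := Finset ι
  μ := Measure.count
  sigmaFinite := inferInstance
  f t s := signalProb ι * (P.region s).indicator P.density t
  f_meas := (P.measurable_indicator_region P.measurable_density).const_mul _
  f_nonneg t s := mul_nonneg signalProb_pos.le
    (indicator_nonneg (fun _ ht => (P.density_pos_of_mem_region ht).le) t)
  f_zero t s ht := by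
    rw [indicator_of_notMem fun h => ht.not_ge (P.region_subset_Ici s h), mul_zero]
  f_prob := by
    have hint (k : ι) : IntegrableOn P.density (P.cell k) :=
      P.integrableOn_density.mono_set (subset_iUnion _ k)
    rw [integral_count]
    simp only [integral_const_mul]
    rw [P.sum_signalProb_mul_setIntegral_indicator_region hint, ← P.setIntegral_iUnion_cell hint,
      P.integral_density]

lemma integral_toSignalInstance (F : Finset ι → ℝ) :
    ∫ s, F s ∂P.toSignalInstance.μ = ∑ s, F s :=
  integral_count F

lemma support_toSignalInstance_f (s : Finset ι) :
    Function.support (fun t => P.toSignalInstance.f t s) = P.region s := by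
  ext t
  simp only [toSignalInstance, Function.mem_support, mul_ne_zero_iff, indicator_apply_ne_zero]
  exact ⟨fun h => h.2.1, fun h => ⟨signalProb_pos.ne', h, (P.density_pos_of_mem_region h).ne'⟩⟩

lemma DRev_toSignalInstance_le_two_mul [Nonempty ι] {B : ℝ}
    (hB : ∀ r, 0 ≤ r → r * ∫ t in Ici r ∩ ⋃ k, P.cell k, P.density t ≤ B) :
    P.toSignalInstance.DRev ≤ 2 * B := by
  have hnonneg : ∀ t ∈ ⋃ k, P.cell k, 0 ≤ P.density t := fun t ht =>
    let ⟨k, hk⟩ := mem_iUnion.1 ht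
    (P.density_pos k t hk).le
  have hs (s : Finset ι) :
      sSup {y : ℝ | ∃ r : ℝ, 0 ≤ r ∧ y = r * ∫ t in Ici r, P.toSignalInstance.f t s} ≤
        signalProb ι * B := by
    refine csSup_le ⟨0, 0, le_rfl, by simp⟩ ?_
    rintro _ ⟨r, hr, rfl⟩
    have hmono : ∫ t in Ici r ∩ P.region s, P.density t ≤
        ∫ t in Ici r ∩ ⋃ k, P.cell k, P.density t :=
      setIntegral_mono_set (P.integrableOn_density.mono_set inter_subset_right)
        (ae_restrict_of_forall_mem
          (measurableSet_Ici.inter (MeasurableSet.iUnion P.measurableSet_cell))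
          fun t ht => hnonneg t ht.2)
        (inter_subset_inter_right _ (P.region_subset_iUnion_cell s)).eventuallyLE
    calc r * ∫ t in Ici r, P.toSignalInstance.f t s
        = signalProb ι * (r * ∫ t in Ici r ∩ P.region s, P.density t) := by
          simp only [toSignalInstance, integral_const_mul,
            setIntegral_indicator (P.measurableSet_region s), mul_left_comm]
      _ ≤ signalProb ι * B :=
          mul_le_mul_of_nonneg_left ((mul_le_mul_of_nonneg_left hmono hr).trans (hB r hr))
            signalProb_pos.le
  calc P.toSignalInstance.DRev
      = ∑ s : Finset ι,
          sSup {y : ℝ | ∃ r : ℝ, 0 ≤ r ∧ y = r * ∫ t in Ici r, P.toSignalInstance.f t s} :=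
        P.integral_toSignalInstance _
    _ ≤ ∑ _s : Finset ι, signalProb ι * B := Finset.sum_le_sum fun s _ => hs s
    _ = 2 * B := by
        rw [Finset.sum_const, Finset.card_univ, Fintype.card_finset, nsmul_eq_mul, ← mul_assoc,
          Nat.cast_pow, Nat.cast_ofNat, two_pow_card_mul_signalProb]

/-- The price of the cell of the value `t`, where `q k` is the price of cell `k`; it is `0` outside
the cells. -/
noncomputable def price (q : ι → ℝ) (t : ℝ) : ℝ := ∑ k, (P.cell k).indicator (fun _ => q k) t

/-- The allocation rule selling to a report exactly when its cell is in the signal. -/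
noncomputable def allocation (t : ℝ) (s : Finset ι) : ℝ := (P.region s).indicator 1 t

/-- The payment rule charging the price of the reported cell when that cell is in the signal. -/
noncomputable def payment (q : ι → ℝ) (t : ℝ) (s : Finset ι) : ℝ :=
  (P.region s).indicator (P.price q) t

variable {P} in
lemma price_of_mem_cell (q : ι → ℝ) {t : ℝ} {k : ι} (hk : t ∈ P.cell k) : P.price q t = q k := by
  rw [price, Finset.sum_eq_single k, indicator_of_mem hk]
  · exact fun l _ hlk => indicator_of_notMem (fun hl => hlk (cell_index_unique hl hk)) _
  · exact fun h => absurd (Finset.mem_univ k) h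

lemma measurable_price (q : ι → ℝ) : Measurable (P.price q) :=
  Finset.measurable_fun_sum _ fun k _ => measurable_const.indicator (P.measurableSet_cell k)

lemma measurable_allocation : Measurable fun q : ℝ × Finset ι => P.allocation q.1 q.2 :=
  P.measurable_indicator_region measurable_one

lemma measurable_payment (q : ι → ℝ) : Measurable fun z : ℝ × Finset ι => P.payment q z.1 z.2 :=
  P.measurable_indicator_region (P.measurable_price q)

lemma allocation_mem_Icc (t : ℝ) (s : Finset ι) : P.allocation t s ∈ Icc (0 : ℝ) 1 :=
  ⟨indicator_nonneg (fun _ _ => zero_le_one) t,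
    indicator_le_self' (fun _ _ => zero_le_one) t⟩

lemma payment_nonneg {q : ι → ℝ} (hq : ∀ k, 0 ≤ q k) (t : ℝ) (s : Finset ι) :
    0 ≤ P.payment q t s :=
  indicator_nonneg
    (fun t _ => Finset.sum_nonneg fun k _ => indicator_nonneg (fun _ _ => hq k) t) t

lemma mul_allocation_sub_payment (q : ι → ℝ) (t t' : ℝ) (s : Finset ι) :
    t * P.allocation t' s - P.payment q t' s =
      (P.region s).indicator (fun τ => t - P.price q τ) t' := by
  by_cases h : t' ∈ P.region s <;> simp [allocation, payment, h]

lemma mul_allocation_sub_payment_nonneg {q : ι → ℝ} (hq : ∀ k, ∀ t ∈ P.cell k, q k ≤ t) (t : ℝ)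
    (s : Finset ι) : 0 ≤ t * P.allocation t s - P.payment q t s := by
  rw [mul_allocation_sub_payment]
  refine indicator_apply_nonneg fun ht => ?_
  obtain ⟨k, hk⟩ := exists_mem_cell_of_mem_region ht
  rw [price_of_mem_cell q hk]
  exact sub_nonneg.2 (hq k t hk)

lemma Rev_toSignalInstance_payment (q : ι → ℝ) :
    P.toSignalInstance.Rev (P.payment q) = ∑ k, (∫ t in P.cell k, P.density t) * q k := by
  have hcell (k : ι) : EqOn (fun t => P.density t * P.price q t) (fun t => P.density t * q k)
      (P.cell k) := fun t ht => by simp only [price_of_mem_cell q ht]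
  have hint (k : ι) : IntegrableOn (fun t => P.density t * P.price q t) (P.cell k) :=
    (integrableOn_congr_fun (hcell k) (P.measurableSet_cell k)).2
      ((P.integrableOn_density.mono_set (subset_iUnion _ k)).mul_const _)
  calc P.toSignalInstance.Rev (P.payment q)
      = ∑ s : Finset ι, ∫ t in Ici 0, P.toSignalInstance.f t s * P.payment q t s :=
        P.integral_toSignalInstance _
    _ = ∑ s, signalProb ι * ∫ t in Ici 0,
          (P.region s).indicator (fun t => P.density t * P.price q t) t := by
        simp only [toSignalInstance, payment, indicator_mul, mul_assoc, integral_const_mul]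
    _ = ∑ k, ∫ t in P.cell k, P.density t * P.price q t :=
        P.sum_signalProb_mul_setIntegral_indicator_region hint
    _ = ∑ k, (∫ t in P.cell k, P.density t) * q k := by
        simp only [← integral_mul_const, setIntegral_congr_fun (P.measurableSet_cell _) (hcell _)]

variable {P} in
lemma sum_f_mul_indicator_region_of_same_cell (h : ℝ → ℝ) {t t' : ℝ} {k : ι}
    (ht : t ∈ P.cell k) (ht' : t' ∈ P.cell k) :
    ∑ s : Finset ι, P.toSignalInstance.f t s * (P.region s).indicator h t' =
      P.density t * h t' := by
  classical
  simp only [toSignalInstance, indicator_apply, mem_region_iff ht, mem_region_iff ht']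
  rw [← one_mul (P.density t * h t'), ← sum_signalProb_of_mem k, Finset.sum_mul,
    Finset.sum_filter]
  exact Finset.sum_congr rfl fun s _ => by split_ifs <;> simp [mul_assoc]

variable {P} in
lemma sum_f_mul_indicator_region_of_ne_cell (h : ℝ → ℝ) {t t' : ℝ} {k l : ι} (hkl : k ≠ l)
    (ht : t ∈ P.cell k) (ht' : t' ∈ P.cell l) :
    ∑ s : Finset ι, P.toSignalInstance.f t s * (P.region s).indicator h t' =
      1 / 2 * P.density t * h t' := by
  classical
  simp only [toSignalInstance, indicator_apply, mem_region_iff ht, mem_region_iff ht']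
  rw [← sum_signalProb_of_mem_of_mem hkl, Finset.sum_mul, Finset.sum_mul, Finset.sum_filter]
  exact Finset.sum_congr rfl fun s _ => by by_cases k ∈ s <;> by_cases l ∈ s <;> simp [*]

lemma integral_f_mul_utility_misreport_le {q : ι → ℝ} (hq₀ : ∀ k, 0 ≤ q k)
    (hq : ∀ k, ∀ t ∈ P.cell k, 2 * q k ≤ t) (t t' : ℝ) :
    ∫ s, P.toSignalInstance.f t s * (t * P.allocation t' s - P.payment q t' s)
        ∂P.toSignalInstance.μ ≤
      ∫ s, P.toSignalInstance.f t s * (t * P.allocation t s - P.payment q t s)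
        ∂P.toSignalInstance.μ := by
  refine (P.integral_toSignalInstance _).trans_le
    (le_trans ?_ (P.integral_toSignalInstance _).ge)
  simp only [mul_allocation_sub_payment]
  by_cases ht : ∃ k, t ∈ P.cell k
  swap
  · have hf (s : Finset ι) : P.toSignalInstance.f t s = 0 :=
      mul_eq_zero_of_right _ (indicator_of_notMem (fun h => ht (exists_mem_cell_of_mem_region h)) _)
    simp only [hf, zero_mul, le_refl]
  obtain ⟨k, hk⟩ := ht
  have hdensity := (P.density_pos k t hk).le
  have htk := hq k t hk
  rw [sum_f_mul_indicator_region_of_same_cell _ hk hk, price_of_mem_cell q hk]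
  by_cases ht' : ∃ l, t' ∈ P.cell l
  swap
  · have hx (s : Finset ι) : (P.region s).indicator (fun τ => t - P.price q τ) t' = 0 :=
      indicator_of_notMem (fun h => ht' (exists_mem_cell_of_mem_region h)) _
    simp only [hx, mul_zero, Finset.sum_const_zero]
    exact mul_nonneg hdensity (by linarith [hq₀ k])
  obtain ⟨l, hl⟩ := ht'
  rcases eq_or_ne k l with rfl | hkl
  · rw [sum_f_mul_indicator_region_of_same_cell _ hk hl, price_of_mem_cell q hl]
  · rw [sum_f_mul_indicator_region_of_ne_cell _ hkl hk hl, price_of_mem_cell q hl]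
    calc 1 / 2 * P.density t * (t - q l) = P.density t * ((t - q l) / 2) := by ring
      _ ≤ P.density t * (t - q k) :=
        mul_le_mul_of_nonneg_left (by linarith [hq₀ l]) hdensity

end CellPrior

section Dyadic

lemma integrableOn_rpow_neg_two_Ici {r : ℝ} (hr : 0 < r) :
    IntegrableOn (fun t : ℝ => t ^ (-2 : ℝ)) (Ici r) :=
  (integrableOn_Ici_iff_integrableOn_Ioi).2 (integrableOn_Ioi_rpow_of_lt (by norm_num) hr)

lemma integral_rpow_neg_two_Ici {r : ℝ} (hr : 0 < r) : ∫ t in Ici r, t ^ (-2 : ℝ) = r⁻¹ := by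
  rw [integral_Ici_eq_integral_Ioi, integral_Ioi_rpow_of_lt (by norm_num) hr]
  norm_num [Real.rpow_neg_one]

/-- The dyadic cell `[2 ^ k, 2 ^ (k + 1))`. -/
def dyadicCell (k : ℕ) : Set ℝ := Ico (2 ^ k) (2 ^ (k + 1))

lemma measurableSet_dyadicCell (k : ℕ) : MeasurableSet (dyadicCell k) := measurableSet_Ico

lemma pairwise_disjoint_dyadicCell : Pairwise (Function.onFun Disjoint dyadicCell) :=
  (pow_right_mono₀ (one_le_two (α := ℝ))).pairwise_disjoint_on_Ico_succ

lemma pairwise_disjoint_dyadicCell_fin (n : ℕ) :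
    Pairwise (Function.onFun Disjoint fun k : Fin n => dyadicCell k) :=
  fun _ _ hkl => pairwise_disjoint_dyadicCell (Fin.val_ne_of_ne hkl)

lemma pos_of_mem_dyadicCell {k : ℕ} {t : ℝ} (ht : t ∈ dyadicCell k) : 0 < t :=
  (pow_pos two_pos k).trans_le ht.1

lemma two_pow_mem_dyadicCell (k : ℕ) : (2 : ℝ) ^ k ∈ dyadicCell k :=
  ⟨le_rfl, pow_lt_pow_right₀ one_lt_two k.lt_succ_self⟩

lemma integrableOn_rpow_neg_two_dyadicCell (k : ℕ) :
    IntegrableOn (fun t : ℝ => t ^ (-2 : ℝ)) (dyadicCell k) :=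
  (integrableOn_rpow_neg_two_Ici (pow_pos two_pos k)).mono_set Ico_subset_Ici_self

lemma integral_rpow_neg_two_dyadicCell (k : ℕ) :
    ∫ t in dyadicCell k, t ^ (-2 : ℝ) = (2 ^ (k + 1))⁻¹ := by
  have hle : (2 : ℝ) ^ k ≤ 2 ^ (k + 1) := pow_le_pow_right₀ one_le_two k.le_succ
  rw [dyadicCell, integral_Ico_eq_integral_Ioc, ← intervalIntegral.integral_of_le hle,
    integral_rpow (Or.inr ⟨by norm_num, notMem_uIcc_of_lt (by positivity) (by positivity)⟩)]
  norm_num [Real.rpow_neg_one, pow_succ]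
  ring

/-- The constant making `t ^ (-2)` a probability density on the first `n + 1` dyadic cells. -/
noncomputable def dyadicNormalizer (n : ℕ) : ℝ := (∑ k : Fin (n + 1), (2 ^ ((k : ℕ) + 1))⁻¹)⁻¹

lemma dyadicNormalizer_pos (n : ℕ) : 0 < dyadicNormalizer n :=
  inv_pos.2 (Finset.sum_pos (fun _ _ => by positivity) Finset.univ_nonempty)

/-- The equal-revenue prior truncated to the first `n + 1` dyadic cells. -/
noncomputable def equalRevenuePrior (n : ℕ) : CellPrior (Fin (n + 1)) where
  cell k := dyadicCell k
  density t := dyadicNormalizer n * t ^ (-2 : ℝ)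
  measurableSet_cell k := measurableSet_dyadicCell k
  pairwise_disjoint_cell := pairwise_disjoint_dyadicCell_fin _
  nonneg_of_mem_cell _ _ ht := (pos_of_mem_dyadicCell ht).le
  measurable_density := by fun_prop
  density_pos _ _ ht :=
    mul_pos (dyadicNormalizer_pos n) (Real.rpow_pos_of_pos (pos_of_mem_dyadicCell ht) _)
  integral_density := by
    rw [integral_const_mul, integral_iUnion_fintype (fun _ => measurableSet_dyadicCell _)
      (pairwise_disjoint_dyadicCell_fin _)
      fun _ => integrableOn_rpow_neg_two_dyadicCell _]
    simp only [integral_rpow_neg_two_dyadicCell]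
    exact inv_mul_cancel₀ (inv_pos.1 (dyadicNormalizer_pos n)).ne'

lemma equalRevenuePrior_mul_integral_le (n : ℕ) {r : ℝ} (hr : 0 ≤ r) :
    r * ∫ t in Ici r ∩ ⋃ k, (equalRevenuePrior n).cell k, (equalRevenuePrior n).density t ≤
      dyadicNormalizer n := by
  rcases hr.eq_or_lt with rfl | hr
  · simpa using (dyadicNormalizer_pos n).le
  have hnonneg : ∀ t ∈ Ici r, 0 ≤ (equalRevenuePrior n).density t := fun t ht =>
    mul_nonneg (dyadicNormalizer_pos n).le (Real.rpow_nonneg (hr.le.trans ht) _)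
  calc r * ∫ t in Ici r ∩ ⋃ k, (equalRevenuePrior n).cell k, (equalRevenuePrior n).density t
      ≤ r * ∫ t in Ici r, (equalRevenuePrior n).density t := by
        refine mul_le_mul_of_nonneg_left ?_ hr.le
        exact setIntegral_mono_set ((integrableOn_rpow_neg_two_Ici hr).const_mul _)
          (ae_restrict_of_forall_mem measurableSet_Ici hnonneg) inter_subset_left.eventuallyLE
    _ = dyadicNormalizer n := by
        simp only [equalRevenuePrior, integral_const_mul, integral_rpow_neg_two_Ici hr]
        field_simp

lemma equalRevenuePrior_Rev_half (n : ℕ) :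
    (equalRevenuePrior n).toSignalInstance.Rev
        ((equalRevenuePrior n).payment fun k => 2 ^ (k : ℕ) / 2) =
      dyadicNormalizer n * ((n + 1) / 4) := by
  have hcell (k : ℕ) : dyadicNormalizer n * (2 ^ (k + 1))⁻¹ * (2 ^ k / 2) =
      dyadicNormalizer n / 4 := by
    rw [pow_succ]
    field_simp
    norm_num
  simp only [CellPrior.Rev_toSignalInstance_payment, equalRevenuePrior, integral_const_mul,
    integral_rpow_neg_two_dyadicCell, hcell]
  simp only [Finset.sum_const, Finset.card_univ, Fintype.card_fin, nsmul_eq_mul]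
  push_cast
  ring

lemma equalRevenuePrior_mul_DRev_le_Rev_half {n : ℕ} {M : ℝ} (hM : 0 ≤ M) (hn : 8 * M ≤ n + 1) :
    M * (equalRevenuePrior n).toSignalInstance.DRev ≤
      (equalRevenuePrior n).toSignalInstance.Rev
        ((equalRevenuePrior n).payment fun k => 2 ^ (k : ℕ) / 2) := by
  have hDRev : (equalRevenuePrior n).toSignalInstance.DRev ≤ 2 * dyadicNormalizer n :=
    (equalRevenuePrior n).DRev_toSignalInstance_le_two_mul fun _ hr =>
      equalRevenuePrior_mul_integral_le n hr
  have hpos := dyadicNormalizer_pos n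
  calc M * (equalRevenuePrior n).toSignalInstance.DRev
      ≤ M * (2 * dyadicNormalizer n) := mul_le_mul_of_nonneg_left hDRev hM
    _ = dyadicNormalizer n * (8 * M / 4) := by ring
    _ ≤ dyadicNormalizer n * ((n + 1) / 4) := by gcongr
    _ = _ := (equalRevenuePrior_Rev_half n).symm

lemma equalRevenuePrior_exists_support_ne_Icc {n : ℕ} (hn : 2 ≤ n) :
    ∃ s, ∀ l u : ℝ,
      Function.support (fun t => (equalRevenuePrior n).toSignalInstance.f t s) ≠ Icc l u := by
  -- The signal lists the cells of `1` and `4` but not the cell of `2`.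
  let c : Fin 3 → Fin (n + 1) := Fin.castLE (by omega)
  have hc : Function.Injective c := Fin.castLE_injective _
  have hmem (i : Fin 3) :
      (2 : ℝ) ^ (i : ℕ) ∈ (equalRevenuePrior n).region {c 0, c 2} ↔ i = 0 ∨ i = 2 := by
    have hi : (2 : ℝ) ^ (i : ℕ) ∈ (equalRevenuePrior n).cell (c i) := two_pow_mem_dyadicCell i
    rw [CellPrior.mem_region_iff hi, Finset.mem_insert, Finset.mem_singleton, hc.eq_iff, hc.eq_iff]
  refine ⟨({c 0, c 2} : Finset (Fin (n + 1))), fun l u h => ?_⟩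
  rw [CellPrior.support_toSignalInstance_f] at h
  simp only [h] at hmem
  have h1 : (2 : ℝ) ^ ((1 : Fin 3) : ℕ) ∈ Icc l u :=
    ordConnected_Icc.out ((hmem 0).2 (by simp)) ((hmem 2).2 (by simp)) (by norm_num)
  simpa using (hmem 1).1 h1

end Dyadic

/-- **Unbounded gap for irregular distributions even without negative payments.**
For every `M > 0` there exists a single-buyer pricing instance with signals — whose
conditional value distributions are not all regular — together with an ex post IR, BIC
mechanism with no negative payments, whose expected revenue is at least `M` times the
optimal revenue under public signals of that instance. -/
theorem exists_irregular_instance_private_revenue_ge_mul_public (M : ℝ) (hM : 0 < M) :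
    ∃ (I : SignalInstance) (x p : ℝ → I.S → ℝ),
      -- the conditional value distributions are not all regular
      (¬ ∀ s : I.S, ∃ l u : ℝ, l ≤ u ∧
        Function.support (fun t => I.f t s) = Icc l u ∧
        MonotoneOn (fun t => t - (∫ t' in Ici t, I.f t' s) / I.f t s) (Icc l u)) ∧
      Measurable (fun q : ℝ × I.S => x q.1 q.2) ∧
      Measurable (fun q : ℝ × I.S => p q.1 q.2) ∧
      (∀ t s, 0 ≤ t → x t s ∈ Icc (0:ℝ) 1) ∧
      -- ex post individual rationality
      (∀ t s, 0 ≤ t → 0 ≤ t * x t s - p t s) ∧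
      -- no negative payments
      (∀ t s, 0 ≤ t → 0 ≤ p t s) ∧
      -- Bayesian incentive compatibility
      (∀ t t' : ℝ, 0 ≤ t → 0 ≤ t' →
        ∫ s, I.f t s * (t * x t' s - p t' s) ∂I.μ ≤
          ∫ s, I.f t s * (t * x t s - p t s) ∂I.μ) ∧
      M * I.DRev ≤ I.Rev p := by
  obtain ⟨m, hm⟩ := exists_nat_ge (8 * M)
  let P := equalRevenuePrior (m + 2)
  let q : Fin (m + 2 + 1) → ℝ := fun k => 2 ^ (k : ℕ) / 2
  have hq₀ (k) : 0 ≤ q k := by positivity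
  have hq (k) (t) (ht : t ∈ P.cell k) : 2 * q k ≤ t := (mul_div_cancel₀ _ two_ne_zero).trans_le ht.1
  have hq' (k) (t) (ht : t ∈ P.cell k) : q k ≤ t := by linarith [hq₀ k, hq k t ht]
  refine ⟨P.toSignalInstance, P.allocation, P.payment q, fun hregular => ?_,
    P.measurable_allocation, P.measurable_payment q, fun t s _ => P.allocation_mem_Icc t s,
    fun t s _ => P.mul_allocation_sub_payment_nonneg hq' t s,
    fun t s _ => P.payment_nonneg hq₀ t s,
    fun t t' _ _ => P.integral_f_mul_utility_misreport_le hq₀ hq t t',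
    equalRevenuePrior_mul_DRev_le_Rev_half hM.le (by push_cast; linarith)⟩
  obtain ⟨s, hs⟩ := equalRevenuePrior_exists_support_ne_Icc (n := m + 2) (by omega)
  obtain ⟨l, u, -, hsupport, -⟩ := hregular s
  exact hs l u hsupport
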